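/- arXiv:2507.11009 — 2 statements merged into one kernel-verified Lean document; each statement's English description precedes it below -/
import Mathlib

section
/- Let u be a positive divisor of q−1 and y ∈ {1, ..., m}. Then the repair bandwidth b = Σ_{(w',z) ∈ ({0,...,n'−1}×{1,...,m}) \ {(n'−1,y)}} rank_B({ζ^{u(t + s·d_{w',z})} : t ∈ T_{n'−1,y}, s ∈ {0, ..., r̄−1}}) of the linear repair scheme of Construction 2 for a node of rack (n'−1, y) satisfies b < ((n̄−1) + (m+1)r̄ + 2)·l/r̄. -/
/-- `∏_{j=1}^{y-1} p_j` (the empty product is `1`). -/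
def bigP (p : ℕ → ℕ) (y : ℕ) : ℕ := ∏ j ∈ Finset.Icc 1 (y - 1), p j

/-- `d_{w,y} = r^w · ∏_{j=1}^{y-1} p_j`. -/
def dwy (p : ℕ → ℕ) (r w y : ℕ) : ℕ := r ^ w * bigP p y

/-- The digit of `t` at position `pos = w·m + y` (`1 ≤ y ≤ m`) in the multi-base
expansion `t = Σ_{w,y} t_{wm+y} · d_{w,y}`, namely `(t / d_{w,y}) % p_y`. -/
def digit (p : ℕ → ℕ) (m r t pos : ℕ) : ℕ :=
  t / dwy p r ((pos - 1) / m) ((pos - 1) % m + 1) % p ((pos - 1) % m + 1)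

/-- `T_{n'-1,y}`: the `t ∈ {0,…,l-1}` whose digits at positions
`(n'-1)m+y, …, n'm` and at positions `1, …, y-1` all vanish. -/
def Ttop (p : ℕ → ℕ) (m r n' l y : ℕ) : Set ℕ :=
  {t : ℕ | t < l ∧
    (∀ pos, (n' - 1) * m + y ≤ pos → pos ≤ n' * m → digit p m r t pos = 0) ∧
    (∀ pos, 1 ≤ pos → pos ≤ y - 1 → digit p m r t pos = 0)}

theorem bigP_one (p : ℕ → ℕ) : bigP p 1 = 1 := by
  simp [bigP]

theorem bigP_succ (p : ℕ → ℕ) {z : ℕ} (hz : 1 ≤ z) : bigP p (z + 1) = bigP p z * p z := by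
  obtain ⟨k, rfl⟩ : ∃ k, z = k + 1 := ⟨z - 1, by omega⟩
  simp [bigP, Finset.prod_Icc_succ_top]

theorem bigP_dvd_bigP (p : ℕ → ℕ) {y z : ℕ} (hyz : y ≤ z) : bigP p y ∣ bigP p z :=
  Finset.prod_dvd_prod_of_subset _ _ _ (Finset.Icc_subset_Icc_right (by omega))

/-- Cumulative products of factors `≥ 2` exceed the sum of the earlier ones. -/
theorem sum_bigP_lt {p : ℕ → ℕ} {m : ℕ} (hp : ∀ i ∈ Finset.Icc 1 m, 2 ≤ p i) :
    ∑ z ∈ Finset.Icc 1 m, bigP p z < bigP p (m + 1) := by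
  induction m with
  | zero => simp [bigP]
  | succ k ih =>
    have hk := ih fun i hi => hp i (by simp only [Finset.mem_Icc] at *; omega)
    have h2 := hp (k + 1) (by simp)
    rw [Finset.sum_Icc_succ_top (by omega), bigP_succ p (by omega : 1 ≤ k + 1)]
    nlinarith

theorem digit_position (p : ℕ → ℕ) {m : ℕ} (r t w : ℕ) {z : ℕ} (hz : z ∈ Finset.Icc 1 m) :
    digit p m r t (w * m + z) = t / (r ^ w * bigP p z) % p z := by
  rw [Finset.mem_Icc] at hz
  obtain ⟨k, rfl⟩ : ∃ k, z = k + 1 := ⟨z - 1, by omega⟩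
  have hk : k < m := by omega
  have hdiv : (w * m + (k + 1) - 1) / m = w := by
    rw [show w * m + (k + 1) - 1 = k + m * w by rw [mul_comm w]; omega,
      Nat.add_mul_div_left _ _ (by omega), Nat.div_eq_of_lt hk, zero_add]
  have hmod : (w * m + (k + 1) - 1) % m = k := by
    rw [show w * m + (k + 1) - 1 = k + m * w by rw [mul_comm w]; omega,
      Nat.add_mul_mod_self_left, Nat.mod_eq_of_lt hk]
  rw [digit, dwy, hdiv, hmod]

theorem bigP_dvd_of_digit_eq_zero {p : ℕ → ℕ} {m r t y : ℕ} (hy : y ∈ Finset.Icc 1 m)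
    (h : ∀ pos, 1 ≤ pos → pos ≤ y - 1 → digit p m r t pos = 0) : bigP p y ∣ t := by
  rw [Finset.mem_Icc] at hy
  suffices H : ∀ z, 1 ≤ z → z ≤ y → bigP p z ∣ t from H y hy.1 le_rfl
  intro z hz
  induction z, hz using Nat.le_induction with
  | base => simp [bigP_one]
  | succ z hz ih =>
    intro hzy
    obtain ⟨k, hk⟩ := ih (by omega)
    have hd := digit_position p r t 0 (m := m) (z := z) (Finset.mem_Icc.2 ⟨hz, by omega⟩)
    rw [zero_mul, zero_add, h z hz (by omega), pow_zero, one_mul] at hd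
    rw [bigP_succ p hz]
    exact Nat.mul_dvd_of_dvd_div ⟨k, hk⟩ (Nat.dvd_of_mod_eq_zero hd.symm)

theorem lt_of_digit_eq_zero {p : ℕ → ℕ} {m r t N y : ℕ} (hpos : ∀ i ∈ Finset.Icc 1 m, 0 < p i)
    (hr : 0 < r) (hy : y ∈ Finset.Icc 1 m) (ht : t < r ^ N * bigP p (m + 1))
    (h : ∀ pos, N * m + y ≤ pos → pos ≤ (N + 1) * m → digit p m r t pos = 0) :
    t < r ^ N * bigP p y := by
  rw [Finset.mem_Icc] at hy
  refine Nat.decreasingInduction' (P := fun z => t < r ^ N * bigP p z) ?_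
    (by omega : y ≤ m + 1) ht
  intro z hzm hyz hlt
  have hz : z ∈ Finset.Icc 1 m := Finset.mem_Icc.2 ⟨by omega, by omega⟩
  have hd := digit_position p r t N hz
  rw [h (N * m + z) (by omega) (by rw [add_mul]; omega)] at hd
  have hP : 0 < bigP p z := Finset.prod_pos fun i hi =>
    hpos i (by simp only [Finset.mem_Icc] at *; omega)
  rw [bigP_succ p (by omega : 1 ≤ z), ← mul_assoc] at hlt
  rw [Nat.mod_eq_of_lt (Nat.div_lt_of_lt_mul hlt)] at hd
  exact (Nat.div_eq_zero_iff.1 hd.symm).resolve_left (by positivity)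

/-- If every exponent is `u * (D * k + s * (D * e))` with `k < L`, `s < r`, then at most
`L + (r - 1) * e` distinct powers occur. -/
theorem finrank_span_pow_le {B F : Type*} [Field B] [Field F] [Algebra B F] (ζ : F)
    {u D L r e : ℕ} {T : Set ℕ} (hT : ∀ t ∈ T, ∃ k < L, t = D * k) :
    Module.finrank B (Submodule.span B
      {x : F | ∃ t ∈ T, ∃ s < r, x = ζ ^ (u * (t + s * (D * e)))}) ≤ L + (r - 1) * e := by
  classical
  set S : Finset F := (Finset.range (L + (r - 1) * e)).image fun k => ζ ^ (u * (D * k)) with hS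
  have hsub : {x : F | ∃ t ∈ T, ∃ s < r, x = ζ ^ (u * (t + s * (D * e)))} ⊆ (S : Set F) := by
    rintro x ⟨t, ht, s, hs, rfl⟩
    obtain ⟨k, hk, rfl⟩ := hT t ht
    rw [hS, Finset.mem_coe, Finset.mem_image]
    refine ⟨k + s * e, Finset.mem_range.2 ?_, by ring_nf⟩
    have : s * e ≤ (r - 1) * e := Nat.mul_le_mul_right _ (by omega)
    omega
  calc _ ≤ Module.finrank B (Submodule.span B (S : Set F)) :=
        Submodule.finrank_mono (Submodule.span_mono hsub)
    _ ≤ S.card := finrank_span_finset_le_card S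
    _ ≤ _ := by simpa using Finset.card_image_le (s := Finset.range (L + (r - 1) * e))
                  (f := fun k => ζ ^ (u * (D * k)))

theorem exists_eq_mul_of_mem_Ttop {p : ℕ → ℕ} {m r N y t : ℕ}
    (hpos : ∀ i ∈ Finset.Icc 1 m, 0 < p i) (hr : r = bigP p (m + 1)) (hr0 : 0 < r)
    (hy : y ∈ Finset.Icc 1 m) (ht : t ∈ Ttop p m r (N + 1) (r ^ (N + 1)) y) :
    ∃ k < r ^ N, t = bigP p y * k := by
  obtain ⟨htl, htop, hlow⟩ := ht
  obtain ⟨k, rfl⟩ := bigP_dvd_of_digit_eq_zero hy hlow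
  have hlt := lt_of_digit_eq_zero hpos hr0 hy (by rwa [← hr, ← pow_succ]) htop
  rw [Nat.add_sub_cancel, mul_comm (r ^ N)] at hlt
  exact ⟨k, Nat.lt_of_mul_lt_mul_left hlt, rfl⟩

/-- The host rack and the racks above it, or below `y` in the lowest block, are charged the trivial
bound `r * r ^ N`; the others are charged `r ^ N + (r - 1) * d / D`. -/
theorem sum_rack_charge_le {p : ℕ → ℕ} {m r N y : ℕ} (hp : ∀ i ∈ Finset.Icc 1 m, 2 ≤ p i)
    (hr : r = bigP p (m + 1)) (hy : y ∈ Finset.Icc 1 m) :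
    ∑ wz ∈ Finset.range (N + 1) ×ˢ Finset.Icc 1 m,
      (bigP p y * r ^ N + (if wz.1 = N ∧ y ≤ wz.2 then 0 else (r - 1) * dwy p r wz.1 wz.2)
        + (if wz.1 = 0 ∧ wz.2 < y then bigP p y * (r * r ^ N) else 0)
        + (if wz.1 = N ∧ y ≤ wz.2 then bigP p y * (r * r ^ N) else 0))
      ≤ bigP p y * (((N + 1) * m + (r - 1) + m * r) * r ^ N) := by
  have hy' := Finset.mem_Icc.1 hy
  have hlow : ∀ W, ∑ w ∈ Finset.range W, ∑ z ∈ Finset.Icc 1 m, dwy p r w z < r ^ W := by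
    intro W
    have h := sum_bigP_lt hp
    rw [← hr] at h
    induction W with
    | zero => simp
    | succ W ih =>
      rw [Finset.sum_range_succ]
      simp only [dwy] at ih ⊢
      rw [← Finset.mul_sum, pow_succ]
      have := Nat.mul_le_mul_left (r ^ W) (Nat.succ_le_of_lt h)
      rw [Nat.mul_succ] at this
      omega
  have hfilter : (Finset.Icc 1 m).filter (· < y) = Finset.Icc 1 (y - 1) := by
    ext z; simp only [Finset.mem_filter, Finset.mem_Icc]; omega
  have hfilter' : (Finset.Icc 1 m).filter (y ≤ ·) = Finset.Icc y m := by
    ext z; simp only [Finset.mem_filter, Finset.mem_Icc]; omega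
  have hgood : ∑ wz ∈ Finset.range (N + 1) ×ˢ Finset.Icc 1 m,
      (if wz.1 = N ∧ y ≤ wz.2 then 0 else (r - 1) * dwy p r wz.1 wz.2)
      ≤ (r - 1) * (bigP p y * r ^ N) := by
    have hD := sum_bigP_lt (p := p) (m := y - 1) fun i hi =>
      hp i (by simp only [Finset.mem_Icc] at *; omega)
    rw [Nat.sub_add_cancel hy'.1] at hD
    rw [Finset.sum_product, Finset.sum_range_succ]
    have h1 : ∑ w ∈ Finset.range N, ∑ z ∈ Finset.Icc 1 m,
        (if w = N ∧ y ≤ z then 0 else (r - 1) * dwy p r w z)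
        = (r - 1) * ∑ w ∈ Finset.range N, ∑ z ∈ Finset.Icc 1 m, dwy p r w z := by
      simp only [Finset.mul_sum]
      refine Finset.sum_congr rfl fun w hw => Finset.sum_congr rfl fun z _ => if_neg ?_
      rw [Finset.mem_range] at hw
      omega
    have h2 : ∑ z ∈ Finset.Icc 1 m, (if N = N ∧ y ≤ z then 0 else (r - 1) * dwy p r N z)
        = (r - 1) * (r ^ N * ∑ z ∈ Finset.Icc 1 (y - 1), bigP p z) := by
      simp only [Finset.mul_sum, ← hfilter, Finset.sum_filter, dwy, true_and]
      refine Finset.sum_congr rfl fun z _ => ?_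
      by_cases h : y ≤ z
      · simp [h]
      · simp [h, not_le.1 h]
    rw [h1, h2, ← mul_add]
    refine Nat.mul_le_mul_left _ ?_
    have := Nat.mul_le_mul_left (r ^ N) (Nat.succ_le_of_lt hD)
    rw [Nat.mul_succ, mul_comm _ (bigP p y)] at this
    have := hlow N
    omega
  have hbelow : ∑ wz ∈ Finset.range (N + 1) ×ˢ Finset.Icc 1 m,
      (if wz.1 = 0 ∧ wz.2 < y then bigP p y * (r * r ^ N) else 0)
      = (y - 1) * (bigP p y * (r * r ^ N)) := by
    rw [← Finset.sum_filter, Finset.sum_const, smul_eq_mul, Finset.filter_product (· = 0) (· < y), hfilter,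
      Finset.card_product, Finset.filter_eq' (Finset.range (N + 1)) 0]
    simp
  have habove : ∑ wz ∈ Finset.range (N + 1) ×ˢ Finset.Icc 1 m,
      (if wz.1 = N ∧ y ≤ wz.2 then bigP p y * (r * r ^ N) else 0)
      = (m + 1 - y) * (bigP p y * (r * r ^ N)) := by
    rw [← Finset.sum_filter, Finset.sum_const, smul_eq_mul, Finset.filter_product (· = N) (y ≤ ·), hfilter',
      Finset.card_product, Finset.filter_eq' (Finset.range (N + 1)) N]
    simp
  rw [Finset.sum_add_distrib, Finset.sum_add_distrib, Finset.sum_add_distrib, hbelow, habove,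
    Finset.sum_const, Finset.card_product, Finset.card_range, Nat.card_Icc, smul_eq_mul,
    Nat.add_sub_cancel]
  have hm : (y - 1) + (m + 1 - y) = m := by omega
  calc _ ≤ (N + 1) * m * (bigP p y * r ^ N) + (r - 1) * (bigP p y * r ^ N)
        + ((y - 1) + (m + 1 - y)) * (bigP p y * (r * r ^ N)) := by
        rw [add_mul (y - 1)]; omega
    _ = _ := by rw [hm]; ring

/-- **Theorem 6(iii).** Construction-2 setting: `B = GF(q)`,
primes `p 1, …, p m` (`m ≥ 2`), `r = p 1 ⋯ p m`, `n' ≥ 2`, `n̄ = n'm`,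
`l = r^{n'}`, `F = GF(q^l)`, `ζ` primitive in `F`, `u > 0` a divisor of `q-1`.
For the host rack `(n'-1, y)` with `y ∈ {1, …, m}`, the repair bandwidth
`b = Σ_{(w',z) ≠ (n'-1,y)} rank_B({ζ^{u(t+s·d_{w',z})} : t ∈ T_{n'-1,y}, s < r})`
satisfies `b < ((n̄-1) + (m+1)r + 2)·l/r`. -/
theorem stmt_15 (q m : ℕ) (hm : 2 ≤ m) (p : ℕ → ℕ)
    (hp : ∀ i ∈ Finset.Icc 1 m, (p i).Prime)
    (r : ℕ) (hr : r = ∏ i ∈ Finset.Icc 1 m, p i)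
    (n' : ℕ) (hn' : 2 ≤ n') (l : ℕ) (hl : l = r ^ n')
    (B F : Type*) [Field B] [Field F] [Fintype B] [Fintype F] [Algebra B F]
    (hq : Fintype.card B = q) (hrk : Module.finrank B F = l)
    (ζ : F) (hζ : orderOf ζ = q ^ l - 1)
    (u : ℕ) (hu : 0 < u) (hdvd : u ∣ q - 1)
    (y : ℕ) (hy : y ∈ Finset.Icc 1 m) :
    ((∑ wz ∈ (Finset.range n' ×ˢ Finset.Icc 1 m).erase (n' - 1, y),
        Module.finrank B ↥(Submodule.span B
          {x : F | ∃ t ∈ Ttop p m r n' l y,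
            ∃ s < r, x = ζ ^ (u * (t + s * dwy p r wz.1 wz.2))}) : ℕ) : ℝ)
      < (((n' * m : ℕ) : ℝ) - 1 + (m + 1) * r + 2) * l / r := by
  have hr' : r = bigP p (m + 1) := hr
  have hp2 : ∀ i ∈ Finset.Icc 1 m, 2 ≤ p i := fun i hi => (hp i hi).two_le
  have hpos : ∀ i ∈ Finset.Icc 1 m, 0 < p i := fun i hi => (hp i hi).pos
  have hr0 : 0 < r := hr ▸ Finset.prod_pos hpos
  have hy' := Finset.mem_Icc.1 hy
  have hD : 0 < bigP p y := Finset.prod_pos fun i hi =>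
    hpos i (by simp only [Finset.mem_Icc] at *; omega)
  obtain ⟨N, rfl⟩ : ∃ N, n' = N + 1 := ⟨n' - 1, by omega⟩
  subst hl
  have hT : ∀ t ∈ Ttop p m r (N + 1) (r ^ (N + 1)) y, ∃ k < r ^ N, t = bigP p y * k :=
    fun t ht => exists_eq_mul_of_mem_Ttop hpos hr' hr0 hy ht
  set f : ℕ × ℕ → ℕ := fun wz => Module.finrank B ↥(Submodule.span B
    {x : F | ∃ t ∈ Ttop p m r (N + 1) (r ^ (N + 1)) y,
      ∃ s < r, x = ζ ^ (u * (t + s * dwy p r wz.1 wz.2))}) with hf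
  have htriv : ∀ wz, f wz ≤ r * r ^ N := fun wz => by
    have : FiniteDimensional B F := Module.Finite.of_finite
    rw [← pow_succ', ← hrk]
    exact Submodule.finrank_le _
  have hgood : ∀ wz : ℕ × ℕ, ¬ (wz.1 = 0 ∧ wz.2 < y) →
      bigP p y * f wz ≤ bigP p y * r ^ N + (r - 1) * dwy p r wz.1 wz.2 := by
    rintro ⟨w, z⟩ hwz
    have hdvd : bigP p y ∣ dwy p r w z := by
      by_cases hw : w = 0
      · exact (bigP_dvd_bigP p (by simp only at hwz; omega)).mul_left _
      · have h : bigP p y ∣ r := hr' ▸ bigP_dvd_bigP p (by omega)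
        exact (h.trans (dvd_pow_self r hw)).mul_right _
    obtain ⟨e, he⟩ := hdvd
    have hle : f (w, z) ≤ r ^ N + (r - 1) * e := by
      have h := finrank_span_pow_le (B := B) ζ (u := u) (r := r) (e := e) hT
      rw [← he] at h
      exact h
    calc _ ≤ bigP p y * (r ^ N + (r - 1) * e) := Nat.mul_le_mul_left _ hle
      _ = bigP p y * r ^ N + (r - 1) * dwy p r w z := by rw [he]; ring
  have hcharge : bigP p y * ∑ wz ∈ (Finset.range (N + 1) ×ˢ Finset.Icc 1 m).erase (N, y), f wz
      ≤ bigP p y * (((N + 1) * m + (r - 1) + m * r) * r ^ N) := by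
    refine le_trans ?_ (sum_rack_charge_le hp2 hr' hy)
    rw [Finset.mul_sum]
    refine (Finset.sum_le_sum_of_subset (Finset.erase_subset _ _)).trans
      (Finset.sum_le_sum fun wz _ => ?_)
    have h1 := Nat.mul_le_mul_left (bigP p y) (htriv wz)
    by_cases hlow : wz.1 = 0 ∧ wz.2 < y
    · rw [if_pos hlow]
      omega
    · have h2 := hgood wz hlow
      split_ifs <;> omega
  have hnat : ∑ wz ∈ (Finset.range (N + 1) ×ˢ Finset.Icc 1 m).erase (N, y), f wz
      ≤ ((N + 1) * m + (r - 1) + m * r) * r ^ N := Nat.le_of_mul_le_mul_left hcharge hD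
  have hr0' : (0 : ℝ) < r := by exact_mod_cast hr0
  rw [Nat.add_sub_cancel]
  calc _ ≤ ((((N + 1) * m + (r - 1) + m * r) * r ^ N : ℕ) : ℝ) := by exact_mod_cast hnat
    _ < ((((N + 1) * m : ℕ) : ℝ) - 1 + (m + 1) * r + 2) * (r : ℝ) ^ N := by
      push_cast [Nat.cast_sub (show 1 ≤ r from hr0)]
      refine mul_lt_mul_of_pos_right ?_ (by positivity)
      linarith
    _ = _ := by
      push_cast
      field_simp
      ring
end

section
/- Let u be a positive integer with u dividing q−1 and α ∈ B an element of multiplicative order exactly u. Then the n̄·u field elements α_{w,y,j} = ζ^{d_{w,y}} · α^j, for w ∈ {0, ..., n'−1}, y ∈ {1, ..., m}, and j ∈ {1, ..., u}, are pairwise distinct (so the evaluation-point sets A_{w,y} of Construction 2 are pairwise disjoint). -/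
theorem bigP_pos {p : ℕ → ℕ} {m : ℕ} (hp : ∀ i ∈ Finset.Icc 1 m, 1 < p i) {y : ℕ}
    (hy : y ≤ m + 1) : 0 < bigP p y :=
  Finset.prod_pos fun i hi =>
    zero_lt_one.trans (hp i (Finset.Icc_subset_Icc_right (by omega) hi))

/-- `bigP p` is strictly increasing on `1, …, m + 1` when `p 1, …, p m` all exceed `1`. -/
theorem bigP_lt_bigP {p : ℕ → ℕ} {m : ℕ} (hp : ∀ i ∈ Finset.Icc 1 m, 1 < p i) {y z : ℕ}
    (hy : 1 ≤ y) (hyz : y < z) (hz : z ≤ m + 1) : bigP p y < bigP p z := by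
  have hpos : ∀ i ∈ Finset.Icc 1 (z - 1), 1 < p i := fun i hi =>
    hp i (Finset.Icc_subset_Icc_right (by omega) hi)
  calc bigP p y < bigP p y * p y :=
        lt_mul_of_one_lt_right (bigP_pos hp (by omega)) (hpos y (Finset.mem_Icc.2 (by omega)))
    _ = ∏ j ∈ Finset.Icc 1 y, p j := by
        obtain ⟨k, rfl⟩ := Nat.exists_eq_add_of_le' hy
        exact (Finset.prod_Icc_succ_top (by omega) p).symm
    _ ≤ bigP p z := Finset.prod_le_prod_of_subset_of_one_le'
        (Finset.Icc_subset_Icc_right (by omega)) fun j hj _ => (hpos j hj).le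

theorem dwy_lt_pow_succ {p : ℕ → ℕ} {m : ℕ} (hp : ∀ i ∈ Finset.Icc 1 m, 1 < p i) {r : ℕ}
    (hr : r = bigP p (m + 1)) (w : ℕ) {y : ℕ} (hy : y ∈ Finset.Icc 1 m) :
    dwy p r w y < r ^ (w + 1) := by
  obtain ⟨hy1, hym⟩ := Finset.mem_Icc.1 hy
  have hr0 : 0 < r := hr ▸ bigP_pos hp le_rfl
  have hlt : bigP p y < r := hr ▸ bigP_lt_bigP hp hy1 (by omega) le_rfl
  rw [dwy, pow_succ]
  exact Nat.mul_lt_mul_of_pos_left hlt (pow_pos hr0 w)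

theorem dwy_lt_of_lt {p : ℕ → ℕ} {m : ℕ} (hp : ∀ i ∈ Finset.Icc 1 m, 1 < p i) {r : ℕ}
    (hr : r = bigP p (m + 1)) {w w' y y' : ℕ} (hy : y ∈ Finset.Icc 1 m)
    (hy' : y' ∈ Finset.Icc 1 m) (hw : w < w') : dwy p r w y < dwy p r w' y' := by
  have hr0 : 0 < r := hr ▸ bigP_pos hp le_rfl
  calc dwy p r w y < r ^ (w + 1) := dwy_lt_pow_succ hp hr w hy
    _ ≤ r ^ w' := Nat.pow_le_pow_right hr0 hw
    _ ≤ dwy p r w' y' :=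
      Nat.le_mul_of_pos_right _ (bigP_pos hp (by have := (Finset.mem_Icc.1 hy').2; omega))

theorem dwy_inj {p : ℕ → ℕ} {m : ℕ} (hp : ∀ i ∈ Finset.Icc 1 m, 1 < p i) {r : ℕ}
    (hr : r = bigP p (m + 1)) {w w' y y' : ℕ} (hy : y ∈ Finset.Icc 1 m)
    (hy' : y' ∈ Finset.Icc 1 m) (h : dwy p r w y = dwy p r w' y') : w = w' ∧ y = y' := by
  have hr0 : 0 < r := hr ▸ bigP_pos hp le_rfl
  obtain hw | rfl | hw := lt_trichotomy w w'
  · exact absurd h (dwy_lt_of_lt hp hr hy hy' hw).ne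
  · have hP : bigP p y = bigP p y' := Nat.eq_of_mul_eq_mul_left (pow_pos hr0 w) h
    rw [Finset.mem_Icc] at hy hy'
    obtain hlt | heq | hlt := lt_trichotomy y y'
    · exact absurd hP (bigP_lt_bigP hp hy.1 hlt (by omega)).ne
    · exact ⟨rfl, heq⟩
    · exact absurd hP (bigP_lt_bigP hp hy'.1 hlt (by omega)).ne'
  · exact absurd h.symm (dwy_lt_of_lt hp hr hy' hy hw).ne

/-- `d (q - 1) < q ^ l - 1` for `d < l`. -/
theorem mul_pred_lt_pow_pred {q d l : ℕ} (hq : 1 < q) (hd : d < l) :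
    d * (q - 1) < q ^ l - 1 := by
  have hbern := one_add_mul_sub_le_pow (R := ℤ) (a := q) (by omega) l
  have hmul := Nat.mul_lt_mul_of_pos_right hd (show 0 < q - 1 by omega)
  zify [hq.le] at hmul
  zify [hq.le, Nat.one_le_pow l q (by omega)]
  linarith

/-- Powers of `a` with exponents in `1, …, orderOf a` are distinct. -/
theorem pow_injOn_Icc_one_orderOf {M : Type*} [Monoid M] {a : M} (ha : 0 < orderOf a) :
    Set.InjOn (fun n : ℕ => a ^ n) (Set.Icc 1 (orderOf a)) := by
  intro i hi j hj h
  have hmod : i ≡ j [MOD orderOf a] := ((orderOf_pos_iff.1 ha).pow_eq_pow_iff_modEq).1 h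
  have hmod' : i - 1 ≡ j - 1 [MOD orderOf a] := Nat.ModEq.add_right_cancel' 1 (by
    rwa [Nat.sub_add_cancel hi.1, Nat.sub_add_cancel hj.1])
  have := hmod'.eq_of_lt_of_lt (by have := hi.1; have := hi.2; omega)
    (by have := hj.1; have := hj.2; omega)
  have := hi.1
  have := hj.1
  omega

/-- **evaluation points of Construction 2 are distinct.** Let
`B = GF(q)`, primes `p 1, …, p m` (`m ≥ 2`), `r = p 1 ⋯ p m`, `n' ≥ 2`,
`n̄ = n'm`, `l = r^{n'}`, `F = GF(q^l)`, `ζ` primitive in `F`, `u > 0` a divisor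
of `q - 1`, and `α ∈ B` of multiplicative order exactly `u`.  Then the `n̄·u`
elements `α_{w,y,j} = ζ^{d_{w,y}} · α^j` for `w ∈ {0, …, n'-1}`,
`y ∈ {1, …, m}`, `j ∈ {1, …, u}` are pairwise distinct. -/
theorem stmt_16 (q m : ℕ) (hm : 2 ≤ m) (p : ℕ → ℕ)
    (hp : ∀ i ∈ Finset.Icc 1 m, (p i).Prime)
    (r : ℕ) (hr : r = ∏ i ∈ Finset.Icc 1 m, p i)
    (n' : ℕ) (hn' : 2 ≤ n') (l : ℕ) (hl : l = r ^ n')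
    (B F : Type*) [Field B] [Field F] [Fintype B] [Fintype F] [Algebra B F]
    (hq : Fintype.card B = q) (hrk : Module.finrank B F = l)
    (ζ : F) (hζ : orderOf ζ = q ^ l - 1)
    (u : ℕ) (hu : 0 < u) (hdvd : u ∣ q - 1)
    (α : B) (hα : orderOf α = u) :
    Set.InjOn
      (fun wyj : ℕ × ℕ × ℕ => ζ ^ dwy p r wyj.1 wyj.2.1 * (algebraMap B F α) ^ wyj.2.2)
      {wyj : ℕ × ℕ × ℕ | wyj.1 < n' ∧ wyj.2.1 ∈ Finset.Icc 1 m ∧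
        wyj.2.2 ∈ Finset.Icc 1 u} := by
  subst hα hq
  have hp1 : ∀ i ∈ Finset.Icc 1 m, 1 < p i := fun i hi => (hp i hi).one_lt
  have hrP : r = bigP p (m + 1) := by simpa [bigP] using hr
  have hr0 : 0 < r := hrP ▸ bigP_pos hp1 le_rfl
  have hq1 : 1 < Fintype.card B := Fintype.one_lt_card
  have hexp : ∀ w y, w < n' → y ∈ Finset.Icc 1 m →
      dwy p r w y * (Fintype.card B - 1) < orderOf ζ := fun w y hw hy => by
    rw [hζ]
    exact mul_pred_lt_pow_pred hq1
      ((dwy_lt_pow_succ hp1 hrP w hy).trans_le (hl ▸ Nat.pow_le_pow_right hr0 hw))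
  have hα0 : α ≠ 0 := by
    rintro rfl
    simp at hu
  have hαpow : algebraMap B F α ^ (Fintype.card B - 1) = 1 := by
    rw [← map_pow, FiniteField.pow_card_sub_one_eq_one α hα0, map_one]
  have hζ0 : ζ ≠ 0 := by
    rintro rfl
    have := hexp 0 1 (by omega) (by simp; omega)
    simp at this
  rintro ⟨w, y, j⟩ ⟨hw, hy, hj⟩ ⟨w', y', j'⟩ ⟨hw', hy', hj'⟩ h
  dsimp only at hw hy hj hw' hy' hj' h
  have hpow := congrArg (· ^ (Fintype.card B - 1)) h
  simp only [mul_pow, pow_right_comm _ _ (Fintype.card B - 1), hαpow, one_pow, mul_one] at hpow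
  simp only [← pow_mul, mul_comm (Fintype.card B - 1)] at hpow
  have hd := Nat.eq_of_mul_eq_mul_right (by omega)
    (pow_injOn_Iio_orderOf (hexp w y hw hy) (hexp w' y' hw' hy') hpow)
  obtain ⟨rfl, rfl⟩ := dwy_inj hp1 hrP hy hy' hd
  have hαj := mul_left_cancel₀ (pow_ne_zero _ hζ0) h
  rw [← map_pow, ← map_pow] at hαj
  rw [pow_injOn_Icc_one_orderOf hu (Finset.mem_Icc.1 hj) (Finset.mem_Icc.1 hj')
    ((algebraMap B F).injective hαj)]
end
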